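/- Let L ∈ ℝ^{n,n} be invertible, γ ≥ 0, and let H : ℝ^{n,k} → ℝ^{n,n} be the Kohn–Sham matrix function H(V) = L + Diag(L^{−1} ρ(V) − γ ρ(V)^{1/3}). For every V ∈ ℝ^{n,k} with no zero row, H is Fréchet differentiable at V with derivative L_H(V,E) = 2 Diag( L^{−1} diag(V E^T) − (γ/3)( ρ(V)^{−2/3} ⊙ diag(V E^T) ) ) for all E ∈ ℝ^{n,k}. -/

import Mathlib

open Matrix

attribute [local instance] Matrix.frobeniusNormedAddCommGroup Matrix.frobeniusNormedSpace

/-- The Kohn–Sham matrix function `H(V) = L + Diag(L⁻¹ ρ(V) − γ ρ(V)^(1/3))`, with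
`ρ(V) = diag(V Vᵀ)` and `L` invertible, is Fréchet differentiable at every `V` with no zero
row, with derivative `E ↦ 2 Diag(L⁻¹ diag(V Eᵀ) − (γ/3)(ρ(V)^(−2/3) ⊙ diag(V Eᵀ)))`. -/
theorem frechet_deriv_kohn_sham {n k : ℕ}
    (L : Matrix (Fin n) (Fin n) ℝ) (hL : IsUnit L.det)
    (γ : ℝ) (hγ : 0 ≤ γ)
    (V : Matrix (Fin n) (Fin k) ℝ) (hV : ∀ i : Fin n, V i ≠ 0) :
    ∃ LH : Matrix (Fin n) (Fin k) ℝ →L[ℝ] Matrix (Fin n) (Fin n) ℝ,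
      HasFDerivAt
        (fun W : Matrix (Fin n) (Fin k) ℝ =>
          L + Matrix.diagonal
            (L⁻¹ *ᵥ (W * Wᵀ).diag - γ • fun i : Fin n => (W * Wᵀ).diag i ^ ((1 : ℝ) / 3)))
        LH V ∧
      ∀ E : Matrix (Fin n) (Fin k) ℝ,
        LH E = (2 : ℝ) • Matrix.diagonal
          (L⁻¹ *ᵥ (V * Eᵀ).diag -
            (γ / 3) • fun i : Fin n =>
              (V * Vᵀ).diag i ^ (-(2 : ℝ) / 3) * (V * Eᵀ).diag i) := by
  classical
  let e : Fin n → Fin k → (Matrix (Fin n) (Fin k) ℝ →L[ℝ] ℝ) := fun i j =>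
    LinearMap.toContinuousLinearMap (Matrix.entryLinearMap ℝ ℝ i j)
  have he : ∀ i j W, e i j W = W i j := fun i j W => rfl
  let dr : Fin n → (Matrix (Fin n) (Fin k) ℝ →L[ℝ] ℝ) := fun i =>
    ∑ j, (V i j • e i j + V i j • e i j)
  have hdr : ∀ i E, dr i E = 2 * (V * Eᵀ).diag i := by
    intro i E
    simp only [dr, ContinuousLinearMap.sum_apply, ContinuousLinearMap.add_apply,
      ContinuousLinearMap.smul_apply, he, Matrix.diag_apply, Matrix.mul_apply,
      Matrix.transpose_apply, smul_eq_mul, Finset.mul_sum]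
    exact Finset.sum_congr rfl fun j _ => by ring
  have hr : ∀ i, HasFDerivAt (fun W : Matrix (Fin n) (Fin k) ℝ => (W * Wᵀ).diag i) (dr i) V := by
    intro i
    have h : HasFDerivAt (fun W : Matrix (Fin n) (Fin k) ℝ => ∑ j, e i j W * e i j W) (dr i) V :=
      HasFDerivAt.fun_sum fun j _ => (e i j).hasFDerivAt.mul (e i j).hasFDerivAt
    exact h
  have hne : ∀ i, (V * Vᵀ).diag i ≠ 0 := by
    intro i h
    apply hV i
    have h' : V i ⬝ᵥ V i = 0 := h
    exact dotProduct_self_eq_zero.mp h'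
  let dg : Fin n → (Matrix (Fin n) (Fin k) ℝ →L[ℝ] ℝ) := fun i =>
    (∑ m, L⁻¹ i m • dr m) - γ • ((1 / 3 * (V * Vᵀ).diag i ^ ((1 : ℝ) / 3 - 1)) • dr i)
  let g : Fin n → Matrix (Fin n) (Fin k) ℝ → ℝ := fun i W =>
    (∑ m, L⁻¹ i m • (W * Wᵀ).diag m) - γ • (W * Wᵀ).diag i ^ ((1 : ℝ) / 3)
  have hg : ∀ i, HasFDerivAt (g i) (dg i) V := by
    intro i
    exact (HasFDerivAt.fun_sum fun m _ => (hr m).const_smul (L⁻¹ i m)).sub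
      (((hr i).rpow_const (Or.inl (hne i))).const_smul γ)
  let S : Fin n → Matrix (Fin n) (Fin n) ℝ := fun i => Matrix.single i i 1
  have hdiag : ∀ d : Fin n → ℝ, Matrix.diagonal d = ∑ i, d i • S i := by
    intro d
    ext a b
    simp only [S, Matrix.sum_apply, Matrix.smul_apply, Matrix.single_apply, Matrix.diagonal_apply]
    by_cases hab : a = b
    · subst hab; simp
    · have : ∀ x : Fin n, ¬ (x = a ∧ x = b) := fun x hx => hab (hx.1.symm.trans hx.2)
      simp [hab, this]
  refine ⟨∑ i, (dg i).smulRight (S i), ?_, ?_⟩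
  · have h : HasFDerivAt (fun W => L + ∑ i, g i W • S i) (∑ i, (dg i).smulRight (S i)) V :=
      (HasFDerivAt.fun_sum fun i _ => (hg i).smul_const (S i)).const_add L
    convert h using 3 with W
    rw [hdiag]
    rfl
  · intro E
    rw [hdiag, Finset.smul_sum, ContinuousLinearMap.sum_apply]
    refine Finset.sum_congr rfl fun i _ => ?_
    rw [ContinuousLinearMap.smulRight_apply, smul_smul]
    congr 1
    have hexp : (1 : ℝ) / 3 - 1 = -2 / 3 := by norm_num
    simp only [dg, ContinuousLinearMap.sub_apply, ContinuousLinearMap.sum_apply,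
      ContinuousLinearMap.smul_apply, hdr, hexp, smul_eq_mul, Pi.sub_apply, Pi.smul_apply,
      Matrix.mulVec, dotProduct, mul_sub, Finset.mul_sum]
    congr 1
    · exact Finset.sum_congr rfl fun j _ => by ring
    · ring
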